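/- arXiv:2501.15291 — 2 statements merged into one kernel-verified Lean document; each statement's English description precedes it below -/
import Mathlib

section
/- The series ∑_{n=0}^∞ (∫_ℝ cos(x)·e_n(x) dx) · e_n(0) converges and its sum equals 1. (This is the e-product ⟨cos, δ⟩_e of the tempered distributions cos(x) and the Dirac delta δ, computed with respect to the Hermite basis.) -/
open MeasureTheory Polynomial Filter Topology

/-- The physicists' Hermite polynomials: `H 0 = 1`, `H (n+1) = 2x·H n − (H n)'`. -/
noncomputable def hermiteH : ℕ → Polynomial ℝ
  | 0 => 1
  | n + 1 => 2 * X * hermiteH n - derivative (hermiteH n)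

/-- The `n`-th Hermite function, an orthonormal basis of `L²(ℝ)`. -/
noncomputable def hermiteFun (n : ℕ) (x : ℝ) : ℝ :=
  (Real.sqrt (2 ^ n * (n.factorial : ℝ) * Real.sqrt Real.pi))⁻¹
    * (hermiteH n).eval x * Real.exp (-x ^ 2 / 2)

noncomputable def bcoef (m : ℕ) : ℝ := (m.centralBinom : ℝ) / 4 ^ m

lemma bcoef_succ (m : ℕ) : (2 * (m : ℝ) + 2) * bcoef (m + 1) = (2 * m + 1) * bcoef m := by
  have h : ((m : ℝ) + 1) * ((m + 1).centralBinom : ℝ) = 2 * (2 * m + 1) * (m.centralBinom : ℝ) := by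
    exact_mod_cast Nat.succ_mul_centralBinom_succ m
  unfold bcoef
  rw [pow_succ]
  field_simp
  linarith

lemma bcoef_pos (m : ℕ) : 0 < bcoef m := by
  unfold bcoef
  have : 0 < (m.centralBinom : ℝ) := by exact_mod_cast Nat.centralBinom_pos m
  positivity

lemma bcoef_antitone : Antitone bcoef := by
  apply antitone_nat_of_succ_le
  intro m
  have h := bcoef_succ m
  have h2 := bcoef_pos m
  have hm : (0 : ℝ) ≤ m := Nat.cast_nonneg m
  by_contra! hc
  nlinarith

lemma bcoef_sq (m : ℕ) : bcoef m ^ 2 * (2 * m + 1) ≤ 1 := by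
  induction m with
  | zero => simp [bcoef]
  | succ m ih =>
    have h := bcoef_succ m
    have e : bcoef (m + 1) = (2 * m + 1) * bcoef m / (2 * m + 2) := by
      field_simp; linarith
    rw [e]
    push_cast
    have : ((2 * (m:ℝ) + 1) * bcoef m / (2 * m + 2)) ^ 2 * (2 * (m + 1) + 1)
      = (bcoef m ^ 2 * (2 * m + 1)) * ((2 * m + 1) * (2 * m + 3) / (2 * m + 2) ^ 2) := by
      field_simp; ring
    rw [this]
    have h3 : ((2 * (m:ℝ) + 1) * (2 * m + 3) / (2 * m + 2) ^ 2) ≤ 1 := by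
      rw [div_le_one (by positivity)]; nlinarith
    calc _ ≤ (1:ℝ) * 1 := by gcongr
      _ = 1 := by ring

lemma bcoef_tendsto : Tendsto bcoef atTop (𝓝 0) := by
  have h1 : Tendsto (fun m : ℕ => Real.sqrt (1 / ((m : ℝ) + 1))) atTop (𝓝 0) := by
    have := (Real.continuous_sqrt.tendsto 0).comp
      (tendsto_one_div_add_atTop_nhds_zero_nat (𝕜 := ℝ))
    simpa [Function.comp_def] using this
  refine squeeze_zero (fun m => (bcoef_pos m).le) (fun m => ?_) h1
  apply Real.le_sqrt_of_sq_le
  rw [le_div_iff₀ (by positivity)]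
  have := bcoef_sq m
  have hm : (0 : ℝ) ≤ m := Nat.cast_nonneg m
  nlinarith [sq_nonneg (bcoef m)]

lemma choose_neg_half (m : ℕ) : Ring.choose (-1 / 2 : ℝ) m = (-1) ^ m * bcoef m := by
  induction m with
  | zero => simp [bcoef]
  | succ m ih =>
    have h := Ring.choose_smul_choose (-1 / 2 : ℝ) (n := m + 1) (k := m) (by omega)
    simp [Ring.choose_one_right, ih] at h
    have h2 := bcoef_succ m
    have hm : (m : ℝ) + 1 ≠ 0 := by positivity
    apply mul_left_cancel₀ hm
    rw [h, pow_succ]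
    linear_combination ((-1) ^ m / 2) * h2

lemma bcoef_sum : Tendsto (fun N => ∑ m ∈ Finset.range N, (-1 : ℝ) ^ m * bcoef m) atTop
    (𝓝 (Real.sqrt 2)⁻¹) := by
  obtain ⟨l, hl⟩ := bcoef_antitone.tendsto_alternating_series_of_tendsto_zero bcoef_tendsto
  have abel := Real.tendsto_tsum_powerSeries_nhdsWithin_lt hl
  have h2 : Tendsto (fun x : ℝ => ∑' n, (-1 : ℝ) ^ n * bcoef n * x ^ n) (𝓝[<] 1)
      (𝓝 ((1 + 1 : ℝ) ^ (-1 / 2 : ℝ))) := by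
    have hc : ContinuousAt (fun x : ℝ => (1 + x) ^ (-1 / 2 : ℝ)) 1 :=
      ContinuousAt.rpow_const (by fun_prop) (by norm_num)
    have hc' : Tendsto (fun x : ℝ => (1 + x) ^ (-1 / 2 : ℝ)) (𝓝[<] 1) (𝓝 _) :=
      hc.tendsto.mono_left nhdsWithin_le_nhds
    refine hc'.congr' ?_
    have : Set.Ioo (0 : ℝ) 1 ∈ 𝓝[<] (1 : ℝ) := Ioo_mem_nhdsLT (by norm_num)
    filter_upwards [this] with x hx
    have := (Real.one_add_rpow_hasFPowerSeriesOnBall_zero (a := -1 / 2)).hasSum (y := x)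
      (by simp [enorm_eq_nnnorm, ← NNReal.coe_lt_coe, abs_of_pos hx.1, hx.2])
    rw [zero_add] at this
    rw [← this.tsum_eq]
    congr 1
    ext n
    rw [binomialSeries_apply, choose_neg_half]
    simp
  have := tendsto_nhds_unique abel h2
  rw [this] at hl
  convert hl using 2
  rw [Real.sqrt_eq_rpow, ← Real.rpow_neg (by norm_num)]
  norm_num
lemma hermiteH_zero : hermiteH 0 = 1 := by rw [hermiteH]
lemma hermiteH_succ (n : ℕ) : hermiteH (n + 1) = 2 * X * hermiteH n - derivative (hermiteH n) := by
  rw [hermiteH]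
lemma hermiteH_one : hermiteH 1 = 2 * X := by
  rw [hermiteH_succ, hermiteH_zero]; simp

lemma hermiteH_deriv (n : ℕ) : derivative (hermiteH (n + 1)) = C (2 * ((n : ℝ) + 1)) * hermiteH n := by
  induction n with
  | zero => rw [hermiteH_one, hermiteH_zero]; simp [Polynomial.derivative_mul]; rfl
  | succ n ih =>
    rw [hermiteH_succ (n + 1), derivative_sub, derivative_mul, derivative_mul, ih, derivative_mul]
    have h2 : derivative (2 : ℝ[X]) = 0 := by
      exact Polynomial.derivative_ofNat 2
    rw [hermiteH_succ n]
    have hC : (2 : ℝ[X]) = C 2 := rfl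
    simp only [h2, derivative_X, derivative_C, hC]
    push_cast
    simp only [map_add, map_mul, map_one]
    ring

lemma hermiteH_rec (n : ℕ) : hermiteH (n + 2) = 2 * X * hermiteH (n + 1)
    - C (2 * ((n : ℝ) + 1)) * hermiteH n := by
  rw [hermiteH_succ (n + 1), hermiteH_deriv]

lemma hermiteH_eval_rec (n : ℕ) (t : ℝ) : (hermiteH (n + 2)).eval t = 2 * t * (hermiteH (n + 1)).eval t
    - 2 * ((n : ℝ) + 1) * (hermiteH n).eval t := by
  rw [hermiteH_rec]; simp

lemma hermiteH_odd_zero (m : ℕ) : (hermiteH (2 * m + 1)).eval 0 = 0 := by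
  induction m with
  | zero => simp [hermiteH_one]
  | succ m ih =>
    rw [show 2 * (m + 1) + 1 = (2 * m + 1) + 2 by ring, hermiteH_eval_rec, ih]; simp

lemma hermiteH_even_zero (m : ℕ) :
    (hermiteH (2 * m)).eval 0 = (-1) ^ m * ((2 * m).factorial : ℝ) / (m.factorial : ℝ) := by
  induction m with
  | zero => simp [hermiteH_zero]
  | succ m ih =>
    rw [show 2 * (m + 1) = (2 * m) + 2 by ring, hermiteH_eval_rec, ih]
    have : (m.factorial : ℝ) ≠ 0 := by positivity
    rw [Nat.factorial_succ m, Nat.factorial_succ (2 * m + 1), Nat.factorial_succ (2 * m)]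
    push_cast
    field_simp
    ring

noncomputable def hh (n : ℕ) (t : ℝ) : ℝ := (hermiteH n).eval t * Real.exp (-t ^ 2 / 2)

lemma hh_deriv (n : ℕ) (t : ℝ) : HasDerivAt (hh n) (t * hh n t - hh (n + 1) t) t := by
  have h1 := (hermiteH n).hasDerivAt t
  have h2 : HasDerivAt (fun t : ℝ => Real.exp (-t ^ 2 / 2)) (Real.exp (-t ^ 2 / 2) * (-t)) t := by
    have : HasDerivAt (fun t : ℝ => -t ^ 2 / 2) (-t) t := by
      have := ((hasDerivAt_pow 2 t).neg).div_const 2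
      exact this.congr_deriv (by norm_num; ring)
    exact this.exp
  refine (h1.mul h2).congr_deriv ?_
  unfold hh
  rw [hermiteH_succ]
  simp
  ring

lemma hh_rec (n : ℕ) (t : ℝ) : hh (n + 2) t = 2 * t * hh (n + 1) t - 2 * ((n : ℝ) + 1) * hh n t := by
  unfold hh; rw [hermiteH_eval_rec]; ring

/-- first derivative of the (n+1)-st function -/
noncomputable def hd (n : ℕ) (t : ℝ) : ℝ := t * hh n t - hh (n + 1) t

lemma hd_deriv (n : ℕ) (t : ℝ) : HasDerivAt (hd n) ((t ^ 2 - (2 * n + 1)) * hh n t) t := by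
  have h := ((hasDerivAt_id t).mul (hh_deriv n t)).sub (hh_deriv (n + 1) t)
  refine h.congr_deriv ?_
  have := hh_rec n t
  simp
  rw [show n + 1 + 1 = n + 2 by ring, this]
  ring

lemma energy (n : ℕ) (t : ℝ) (ht : 0 ≤ t) :
    hd n t ^ 2 + (2 * n + 1 - t ^ 2) * hh n t ^ 2 ≤ hd n 0 ^ 2 + (2 * n + 1) * hh n 0 ^ 2 := by
  have hD : ∀ t, HasDerivAt (fun t => hd n t ^ 2 + (2 * n + 1 - t ^ 2) * hh n t ^ 2)
      (-2 * t * hh n t ^ 2) t := by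
    intro t
    have h := ((hd_deriv n t).pow 2).add
      (((hasDerivAt_const t (2 * (n:ℝ) + 1)).sub (hasDerivAt_pow 2 t)).mul ((hh_deriv n t).pow 2))
    refine h.congr_deriv ?_
    simp [hd]
    ring
  have hanti : AntitoneOn (fun t => hd n t ^ 2 + (2 * n + 1 - t ^ 2) * hh n t ^ 2) (Set.Ici 0) := by
    apply antitoneOn_of_deriv_nonpos (convex_Ici 0)
    · exact fun x _ => (hD x).continuousAt.continuousWithinAt
    · exact fun x _ => (hD x).differentiableAt.differentiableWithinAt
    · intro x hx
      rw [(hD x).deriv]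
      simp at hx
      have := mul_nonneg hx.le (sq_nonneg (hh n x))
      linarith
  have := hanti (Set.mem_Ici.2 le_rfl) (Set.mem_Ici.2 ht) ht
  simpa using this

noncomputable def FF (M : ℕ) (t : ℝ) : ℝ :=
  ∑ m ∈ Finset.range M, hh (2 * m) t / (4 ^ m * (m.factorial : ℝ))

lemma FF_deriv (M : ℕ) (t : ℝ) :
    HasDerivAt (FF (M + 1)) (-(hh (2 * M + 1) t / (2 * (4 ^ M * (M.factorial : ℝ))))) t := by
  induction M with
  | zero =>
    have h := hh_deriv 0 t
    have e : FF (0 + 1) = hh 0 := by ext; simp [FF]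
    rw [e]
    refine h.congr_deriv ?_
    simp [hh, hermiteH_one, hermiteH_zero]
    ring
  | succ M ih =>
    have e : FF (M + 1 + 1) = fun t => FF (M + 1) t
        + hh (2 * (M + 1)) t / (4 ^ (M + 1) * ((M + 1).factorial : ℝ)) := by
      ext; simp [FF, Finset.sum_range_succ]
    rw [e]
    refine (ih.add ((hh_deriv (2 * (M + 1)) t).div_const _)).congr_deriv ?_
    have h := hh_rec (2 * M + 1) t
    have hf : (M.factorial : ℝ) ≠ 0 := by positivity
    rw [show 2 * (M + 1) + 1 = 2 * M + 1 + 2 by ring, h, show 2 * (M + 1) = 2 * M + 1 + 1 by ring,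
      Nat.factorial_succ, pow_succ]
    push_cast
    field_simp
    ring

lemma hh_odd_zero (m : ℕ) : hh (2 * m + 1) 0 = 0 := by simp [hh, hermiteH_odd_zero]

lemma FF_diff (M : ℕ) : |FF (M + 1) 1 - FF (M + 1) 0| ≤ 3 * bcoef M := by
  set N := 2 * M + 1 with hN
  set B := |hd N 0| with hB
  set k : ℝ := 1 / (2 * (4 ^ M * (M.factorial : ℝ))) with hk
  have hkpos : 0 < k := by positivity
  have hNpos : (1 : ℝ) ≤ N := by rw [hN]; push_cast; linarith [(Nat.cast_nonneg M : (0:ℝ) ≤ M)]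
  have hB0 : 0 ≤ B := abs_nonneg _
  have hE : ∀ t, 0 ≤ t → t ≤ 1 → hd N t ^ 2 + (2 * N + 1 - t ^ 2) * hh N t ^ 2 ≤ B ^ 2 := by
    intro t h0 h1
    have := energy N t h0
    rw [hN, hh_odd_zero, ← hN] at this
    rw [hB, sq_abs]; simpa using this
  have hd_le : ∀ t, 0 ≤ t → t ≤ 1 → |hd N t| ≤ B := by
    intro t h0 h1
    refine abs_le_of_sq_le_sq ?_ hB0
    have h2 : (0 : ℝ) ≤ 2 * N + 1 - t ^ 2 := by nlinarith
    nlinarith [hE t h0 h1, mul_nonneg h2 (sq_nonneg (hh N t))]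
  have hh_le : ∀ t, 0 ≤ t → t ≤ 1 → |hh N t| ≤ B := by
    intro t h0 h1
    refine abs_le_of_sq_le_sq ?_ hB0
    have h2 : (0 : ℝ) ≤ 2 * N - t ^ 2 := by nlinarith
    nlinarith [hE t h0 h1, mul_nonneg h2 (sq_nonneg (hh N t)), sq_nonneg (hd N t)]
  have hL : (0 : ℝ) < 2 * N + 1 := by linarith
  have hP : ∀ t, HasDerivAt (fun t => FF (M + 1) t - k * hd N t / (2 * N + 1))
      (-(k * t ^ 2 * hh N t / (2 * N + 1))) t := by
    intro t
    refine ((FF_deriv M t).sub (((hd_deriv N t).const_mul k).div_const (2 * (N:ℝ) + 1))).congr_deriv ?_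
    rw [hk, ← hN]
    field_simp
    ring
  have hmv := (convex_Icc (0 : ℝ) 1).norm_image_sub_le_of_norm_hasDerivWithin_le
    (f := fun t => FF (M + 1) t - k * hd N t / (2 * N + 1)) (C := k * B / (2 * N + 1))
    (x := 0) (y := 1)
    (fun t _ => (hP t).hasDerivWithinAt) (by
      intro t ht
      rw [norm_neg, Real.norm_eq_abs, abs_div, abs_mul, abs_mul, abs_of_pos hkpos, abs_of_pos hL,
        abs_of_nonneg (sq_nonneg t)]
      have h1 := hh_le t ht.1 ht.2
      have h2 : t ^ 2 ≤ 1 := by nlinarith [ht.1, ht.2]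
      apply div_le_div_of_nonneg_right _ hL.le
      calc k * t ^ 2 * |hh N t| ≤ k * 1 * B := by gcongr
        _ = k * B := by ring) (by simp) (by simp)
  have h0 := hd_le 0 le_rfl zero_le_one
  have h1 := hd_le 1 zero_le_one le_rfl
  simp only [Real.norm_eq_abs, sub_zero, abs_one, mul_one] at hmv
  have hBval : k * B / (2 * N + 1) ≤ bcoef M := by
    have hz : hd N 0 = 2 * N * hh (2 * M) 0 := by
      unfold hd
      rw [hN, show 2 * M + 1 + 1 = 2 * M + 2 by ring, hh_rec]
      push_cast; ring
    have hz2 : B = 2 * N * (((2 * M).factorial : ℝ) / M.factorial) := by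
      rw [hB, hz, abs_mul, abs_of_nonneg (by positivity)]
      congr 1
      simp only [hh, hermiteH_even_zero]
      simp [abs_mul, abs_div]
    have hb : bcoef M = ((2 * M).factorial : ℝ) / (4 ^ M * M.factorial * M.factorial) := by
      unfold bcoef
      rw [Nat.centralBinom_eq_two_mul_choose, Nat.cast_choose ℝ (by omega : M ≤ 2 * M)]
      rw [show 2 * M - M = M by omega]
      field_simp
    have e : k * B / (2 * N + 1) = bcoef M * (N / (2 * N + 1)) := by
      rw [hb, hz2, hk]; field_simp
    rw [e]
    have : (N : ℝ) / (2 * N + 1) ≤ 1 := by rw [div_le_one hL]; linarith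
    exact mul_le_of_le_one_right (bcoef_pos M).le this
  have e1 : k * hd N 1 / (2 * N + 1) = (k / (2 * N + 1)) * hd N 1 := by ring
  have e0 : k * hd N 0 / (2 * N + 1) = (k / (2 * N + 1)) * hd N 0 := by ring
  have eB : k * B / (2 * N + 1) = (k / (2 * N + 1)) * B := by ring
  have hc : 0 < k / (2 * N + 1) := by positivity
  rw [e1, e0, eB] at hmv
  rw [eB] at hBval
  set c := k / (2 * N + 1)
  rw [abs_le] at h0 h1 hmv ⊢
  constructor
  · nlinarith [mul_le_mul_of_nonneg_left h0.1 hc.le, mul_le_mul_of_nonneg_left h0.2 hc.le, mul_le_mul_of_nonneg_left h1.1 hc.le, mul_le_mul_of_nonneg_left h1.2 hc.le]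
  · nlinarith [mul_le_mul_of_nonneg_left h0.1 hc.le, mul_le_mul_of_nonneg_left h0.2 hc.le, mul_le_mul_of_nonneg_left h1.1 hc.le, mul_le_mul_of_nonneg_left h1.2 hc.le]

lemma FF_zero (M : ℕ) : FF M 0 = ∑ m ∈ Finset.range M, (-1 : ℝ) ^ m * bcoef m := by
  unfold FF
  apply Finset.sum_congr rfl
  intro m _
  unfold bcoef
  rw [Nat.centralBinom_eq_two_mul_choose, Nat.cast_choose ℝ (by omega : m ≤ 2 * m)]
  rw [show 2 * m - m = m by omega]
  simp [hh, hermiteH_even_zero]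
  field_simp

lemma FF_tendsto : Tendsto (fun M => FF M 1) atTop (𝓝 (Real.sqrt 2)⁻¹) := by
  rw [← tendsto_add_atTop_iff_nat 1]
  have h1 : Tendsto (fun M => FF (M + 1) 0) atTop (𝓝 (Real.sqrt 2)⁻¹) := by
    simp_rw [FF_zero]
    exact (tendsto_add_atTop_iff_nat 1).2 bcoef_sum
  have h2 : Tendsto (fun M => FF (M + 1) 1 - FF (M + 1) 0) atTop (𝓝 0) :=
    squeeze_zero_norm FF_diff (by simpa using bcoef_tendsto.const_mul 3)
  simpa using h2.add h1

lemma integrable_poly_gauss (P : ℝ[X]) :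
    Integrable (fun x : ℝ => P.eval x * Real.exp (-x ^ 2 / 2)) := by
  induction P using Polynomial.induction_on' with
  | add p q hp hq =>
    refine (hp.add hq).congr (Eventually.of_forall fun x => ?_)
    simp [add_mul]
  | monomial n a =>
    have h := integrable_rpow_mul_exp_neg_mul_sq (b := 1 / 2) (by norm_num) (s := n)
      (by linarith [(Nat.cast_nonneg n : (0:ℝ) ≤ n)])
    refine (h.const_mul a).congr (Eventually.of_forall fun x => ?_)
    simp only [Real.rpow_natCast, eval_monomial]
    rw [show -(1 / 2) * x ^ 2 = -x ^ 2 / 2 by ring]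
    ring

noncomputable def WW (P : ℝ[X]) (x : ℝ) : ℂ :=
  Complex.exp (Complex.I * x) * ((P.eval x * Real.exp (-x ^ 2 / 2) : ℝ) : ℂ)

lemma WW_integrable (P : ℝ[X]) : Integrable (WW P) := by
  have h := (integrable_poly_gauss P).ofReal (𝕜 := ℂ)
  refine h.bdd_mul (c := 1) (by fun_prop) (Eventually.of_forall fun x => ?_)
  rw [mul_comm, Complex.norm_exp_ofReal_mul_I]

lemma WW_deriv (P : ℝ[X]) (x : ℝ) :
    HasDerivAt (WW P) (Complex.I * WW P x + WW (derivative P) x - WW (X * P) x) x := by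
  have h1 := P.hasDerivAt x
  have h2 : HasDerivAt (fun t : ℝ => Real.exp (-t ^ 2 / 2)) (Real.exp (-x ^ 2 / 2) * (-x)) x := by
    have : HasDerivAt (fun t : ℝ => -t ^ 2 / 2) (-x) x := by
      have := ((hasDerivAt_pow 2 x).neg).div_const 2
      exact this.congr_deriv (by norm_num; ring)
    exact this.exp
  have h3 := (h1.mul h2).ofReal_comp
  have h4 : HasDerivAt (fun x : ℝ => Complex.exp (Complex.I * x))
      (Complex.exp (Complex.I * x) * Complex.I) x := by
    have : HasDerivAt (fun x : ℝ => Complex.I * (x : ℂ)) Complex.I x := by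
      simpa using (Complex.ofRealCLM.hasDerivAt (x := x)).const_mul Complex.I
    exact this.cexp
  refine (h4.mul h3).congr_deriv ?_
  simp [WW]
  ring

noncomputable def JJ (P : ℝ[X]) : ℂ := ∫ x, WW P x

lemma JJ_X (P : ℝ[X]) : JJ (X * P) = JJ (derivative P) + Complex.I * JJ P := by
  have i1 := WW_integrable P
  have i2 := WW_integrable (derivative P)
  have i3 := WW_integrable (X * P)
  have h := integral_eq_zero_of_hasDerivAt_of_integrable (WW_deriv P)
    (((i1.const_mul Complex.I).add i2).sub i3) i1
  have i4 : Integrable (fun x => Complex.I * WW P x + WW (derivative P) x) :=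
    (i1.const_mul Complex.I).add i2
  rw [integral_sub i4 i3, integral_add (i1.const_mul Complex.I) i2,
    integral_const_mul] at h
  unfold JJ
  linear_combination -h

lemma JJ_C_mul (c : ℝ) (P : ℝ[X]) : JJ (C c * P) = c * JJ P := by
  unfold JJ
  rw [← integral_const_mul]
  congr 1; ext x
  simp [WW]; ring

lemma JJ_sub (P Q : ℝ[X]) : JJ (P - Q) = JJ P - JJ Q := by
  unfold JJ
  rw [← integral_sub (WW_integrable P) (WW_integrable Q)]
  congr 1; ext x
  simp [WW]; ring

lemma JJ_one : JJ 1 = ((Real.sqrt (2 * Real.pi) * Real.exp (-1 ^ 2 / 2) : ℝ) : ℂ) := by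
  have h := fourierIntegral_gaussian (b := 1 / 2) (by norm_num) 1
  unfold JJ
  have e : ∀ x, WW 1 x = Complex.exp (Complex.I * 1 * x) * Complex.exp (-(1 / 2) * (x : ℂ) ^ 2) := by
    intro x
    simp only [WW, eval_one, one_mul, mul_one]
    push_cast
    congr 2
    ring
  simp_rw [e]
  rw [h]
  push_cast
  congr 1
  · rw [Real.sqrt_eq_rpow, Complex.ofReal_cpow (by positivity)]
    push_cast
    congr 1
    ring
  · congr 1; norm_num

lemma JJ_hermite (n : ℕ) : JJ (hermiteH n) = Complex.I ^ n *
    ((Real.sqrt (2 * Real.pi) * hh n 1 : ℝ) : ℂ) := by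
  induction n using Nat.strong_induction_on with
  | _ n ih =>
    match n, ih with
    | 0, _ => rw [hermiteH_zero, JJ_one]; simp [hh, hermiteH_zero]
    | 1, _ =>
      rw [hermiteH_one, show (2 : ℝ[X]) * X = C 2 * (X * 1) by rw [mul_one]; rfl, JJ_C_mul, JJ_X,
        JJ_one]
      have : JJ (derivative 1) = 0 := by simp [JJ, WW]
      rw [this]
      simp [hh, hermiteH_one]
      ring
    | n + 2, ih =>
      have h0 := ih n (by omega)
      have h1 := ih (n + 1) (by omega)
      rw [hermiteH_rec, JJ_sub, JJ_C_mul, mul_assoc, show (2 : ℝ[X]) = C 2 from rfl, JJ_C_mul, JJ_X,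
        hermiteH_deriv, JJ_C_mul, h0, h1, hh_rec]
      push_cast
      have := Complex.I_sq
      linear_combination (2 * Complex.I ^ n * (n + 1) * Real.sqrt (2 * Real.pi) * hh n 1) * this

lemma hermiteFun_eq (n : ℕ) (x : ℝ) : hermiteFun n x =
    (Real.sqrt (2 ^ n * (n.factorial : ℝ) * Real.sqrt Real.pi))⁻¹ * hh n x := by
  unfold hermiteFun hh; ring

lemma cos_hh (n : ℕ) (x : ℝ) : (WW (hermiteH n) x).re = Real.cos x * hh n x := by
  unfold WW hh
  rw [Complex.re_mul_ofReal, mul_comm Complex.I, Complex.exp_ofReal_mul_I_re]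

lemma cos_integral (n : ℕ) : ∫ x, Real.cos x * hh n x =
    (Complex.I ^ n).re * (Real.sqrt (2 * Real.pi) * hh n 1) := by
  simp_rw [← cos_hh]
  have := integral_re (WW_integrable (hermiteH n))
  simp only [RCLike.re_eq_complex_re] at this
  rw [this, ← JJ, JJ_hermite, Complex.re_mul_ofReal]

noncomputable def trm (n : ℕ) : ℝ := (∫ x : ℝ, Real.cos x * hermiteFun n x) * hermiteFun n 0

lemma trm_eq (n : ℕ) : trm n = (Complex.I ^ n).re * (Real.sqrt (2 * Real.pi) * hh n 1) * hh n 0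
    / (2 ^ n * (n.factorial : ℝ) * Real.sqrt Real.pi) := by
  have hpos : 0 < 2 ^ n * (n.factorial : ℝ) * Real.sqrt Real.pi := by positivity
  unfold trm
  simp_rw [hermiteFun_eq]
  have e : ∀ x : ℝ, Real.cos x * ((Real.sqrt (2 ^ n * (n.factorial : ℝ) * Real.sqrt Real.pi))⁻¹ * hh n x)
    = (Real.sqrt (2 ^ n * (n.factorial : ℝ) * Real.sqrt Real.pi))⁻¹ * (Real.cos x * hh n x) := by
    intro x; ring
  simp_rw [e]
  rw [integral_const_mul, cos_integral]
  have hs := Real.mul_self_sqrt hpos.le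
  set s := Real.sqrt (2 ^ n * (n.factorial : ℝ) * Real.sqrt Real.pi)
  rw [← hs, div_eq_mul_inv, mul_inv]
  ring

lemma trm_odd (m : ℕ) : trm (2 * m + 1) = 0 := by
  rw [trm_eq, hh_odd_zero]; simp

lemma trm_even (m : ℕ) : trm (2 * m) = Real.sqrt 2 * (hh (2 * m) 1 / (4 ^ m * (m.factorial : ℝ))) := by
  have hI : (Complex.I ^ (2 * m)).re = (-1) ^ m := by
    rw [pow_mul, Complex.I_sq]
    have : ((-1 : ℂ) ^ m) = (((-1 : ℝ) ^ m : ℝ) : ℂ) := by push_cast; rfl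
    rw [this, Complex.ofReal_re]
  have h0 : hh (2 * m) 0 = (-1) ^ m * ((2 * m).factorial : ℝ) / (m.factorial : ℝ) := by
    simp [hh, hermiteH_even_zero]
  have hsq : ((-1 : ℝ) ^ m) * (-1) ^ m = 1 := by rw [← mul_pow]; norm_num
  rw [trm_eq, hI, h0, pow_mul, Real.sqrt_mul (by norm_num)]
  have hp : Real.sqrt Real.pi ≠ 0 := by positivity
  norm_num
  field_simp
  linear_combination (hh (2 * m) 1) * hsq

lemma trm_sum_even (M : ℕ) : ∑ n ∈ Finset.range (2 * M), trm n = Real.sqrt 2 * FF M 1 := by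
  induction M with
  | zero => simp [FF]
  | succ M ih =>
    rw [show 2 * (M + 1) = 2 * M + 1 + 1 by ring, Finset.sum_range_succ, Finset.sum_range_succ, ih,
      trm_odd, trm_even, FF, FF, Finset.sum_range_succ]
    ring

lemma trm_sum (N : ℕ) : ∑ n ∈ Finset.range N, trm n = Real.sqrt 2 * FF ((N + 1) / 2) 1 := by
  rcases Nat.even_or_odd' N with ⟨M, h | h⟩
  · rw [h, trm_sum_even]; congr 2; omega
  · have h2 := trm_sum_even (M + 1)
    rw [show 2 * (M + 1) = 2 * M + 1 + 1 by ring, Finset.sum_range_succ, trm_odd, add_zero] at h2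
    rw [h, h2]; congr 2; omega

/-- the series `∑ₙ (∫ cos(x) eₙ(x) dx) · eₙ(0)` (the e-product
`⟨cos, δ⟩_e`) converges to `1`; each integral converges absolutely. -/
theorem eProduct_cos_delta :
    (∀ n, Integrable (fun x : ℝ => Real.cos x * hermiteFun n x)
        (volume : Measure ℝ)) ∧
    Tendsto (fun N => ∑ n ∈ Finset.range N,
        (∫ x : ℝ, Real.cos x * hermiteFun n x) * hermiteFun n 0)
      atTop (𝓝 1) := by
  constructor
  · intro n
    have h := (WW_integrable (hermiteH n)).re
    refine (h.const_mul
      (Real.sqrt (2 ^ n * (n.factorial : ℝ) * Real.sqrt Real.pi))⁻¹).congr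
      (Eventually.of_forall fun x => ?_)
    simp only [RCLike.re_eq_complex_re, cos_hh, hermiteFun_eq]
    ring
  · change Tendsto (fun N => ∑ n ∈ Finset.range N, trm n) atTop (𝓝 1)
    simp_rw [trm_sum]
    have hdiv : Tendsto (fun N : ℕ => (N + 1) / 2) atTop atTop := by
      refine tendsto_atTop.2 fun b => ?_
      filter_upwards [eventually_ge_atTop (2 * b)] with N hN
      omega
    have h := (FF_tendsto.comp hdiv).const_mul (Real.sqrt 2)
    rw [mul_inv_cancel₀ (by positivity)] at h
    exact h
end

section
/- The series ∑_{n=0}^∞ (e_n(0))² diverges; equivalently, the sequence of partial sums ∑_{n=0}^N (e_n(0))² tends to +∞ as N → ∞. (Hence the e-product ⟨δ, δ⟩_e of the Dirac delta with itself, computed with respect to the Hermite basis, does not exist.) Equivalently, ∑_{n=0}^∞ (e_n(0))² = (1/√π)·∑_{l=0}^∞ (2l)!/(4^l·(l!)²), and the latter series of nonnegative terms diverges. -/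
open MeasureTheory Polynomial Filter Topology

theorem hermiteH_derivative_succ (n : ℕ) :
    derivative (hermiteH (n + 1)) = 2 * ((n : Polynomial ℝ) + 1) * hermiteH n := by
  induction n with
  | zero => simp [hermiteH]
  | succ k ih =>
    have h1 : hermiteH (k + 2) = 2 * X * hermiteH (k + 1) - derivative (hermiteH (k + 1)) := rfl
    have h2 : hermiteH (k + 1) = 2 * X * hermiteH k - derivative (hermiteH k) := rfl
    have h3 : derivative (hermiteH (k + 2)) = 2 * hermiteH (k + 1)
        + 2 * X * derivative (hermiteH (k + 1))
        - 2 * ((k : Polynomial ℝ) + 1) * derivative (hermiteH k) := by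
      rw [h1, derivative_sub, derivative_mul]
      conv_lhs => rw [ih]
      simp [derivative_mul]
      exact ih.symm
    rw [h3, ih, h2]
    push_cast
    ring

theorem hermiteH_zero_rec (n : ℕ) :
    (hermiteH (n + 2)).eval 0 = -(2 * ((n : ℝ) + 1)) * (hermiteH n).eval 0 := by
  have h1 : hermiteH (n + 2) = 2 * X * hermiteH (n + 1) - derivative (hermiteH (n + 1)) := rfl
  rw [h1, hermiteH_derivative_succ]
  simp

theorem hermiteFun_zero_sq (n : ℕ) :
    (hermiteFun n 0) ^ 2 =
      ((hermiteH n).eval 0) ^ 2 / (2 ^ n * (n.factorial : ℝ) * Real.sqrt Real.pi) := by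
  have h : (0 : ℝ) ≤ 2 ^ n * (n.factorial : ℝ) * Real.sqrt Real.pi := by positivity
  unfold hermiteFun
  rw [mul_pow, mul_pow, inv_pow, Real.sq_sqrt h]
  simp [div_eq_mul_inv, mul_comm]

theorem hermiteFun_zero_sq_rec (n : ℕ) :
    (hermiteFun (n + 2) 0) ^ 2 = ((n : ℝ) + 1) / (n + 2) * (hermiteFun n 0) ^ 2 := by
  have hp : (0 : ℝ) < Real.sqrt Real.pi := Real.sqrt_pos.2 Real.pi_pos
  have hf : (0 : ℝ) < n.factorial := by positivity
  rw [hermiteFun_zero_sq, hermiteFun_zero_sq, hermiteH_zero_rec, Nat.factorial_succ,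
    Nat.factorial_succ]
  push_cast
  have h2 : (n : ℝ) + 1 + 1 = n + 2 := by ring
  rw [h2]
  field_simp
  ring

theorem hermiteFun_zero_odd (l : ℕ) : (hermiteFun (2 * l + 1) 0) ^ 2 = 0 := by
  induction l with
  | zero => simp [hermiteFun, hermiteH]
  | succ k ih =>
    rw [show 2 * (k + 1) + 1 = (2 * k + 1) + 2 by ring, hermiteFun_zero_sq_rec, ih, mul_zero]

theorem centralTerm_succ (l : ℕ) :
    ((2 * (l + 1)).factorial : ℝ) / (4 ^ (l + 1) * (((l + 1).factorial : ℝ)) ^ 2)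
      = (2 * (l : ℝ) + 1) / (2 * l + 2) *
        (((2 * l).factorial : ℝ) / (4 ^ l * ((l.factorial : ℝ)) ^ 2)) := by
  have hf : (0 : ℝ) < l.factorial := by positivity
  rw [show 2 * (l + 1) = (2 * l + 1) + 1 by ring, Nat.factorial_succ, Nat.factorial_succ,
    Nat.factorial_succ]
  push_cast
  field_simp
  ring

theorem hermiteFun_zero_even (l : ℕ) :
    (hermiteFun (2 * l) 0) ^ 2 = (Real.sqrt Real.pi)⁻¹ *
      (((2 * l).factorial : ℝ) / (4 ^ l * ((l.factorial : ℝ)) ^ 2)) := by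
  induction l with
  | zero => rw [hermiteFun_zero_sq]; simp [hermiteH]
  | succ k ih =>
    rw [centralTerm_succ, show 2 * (k + 1) = 2 * k + 2 by ring, hermiteFun_zero_sq_rec, ih]
    push_cast
    ring

theorem centralTerm_lower (l : ℕ) :
    1 / ((l : ℝ) + 1) ≤ ((2 * l).factorial : ℝ) / (4 ^ l * ((l.factorial : ℝ)) ^ 2) := by
  induction l with
  | zero => simp
  | succ k ih =>
    rw [centralTerm_succ]
    refine le_trans ?_ (mul_le_mul_of_nonneg_left ih (by positivity))
    push_cast
    rw [div_mul_div_comm, div_le_div_iff₀ (by positivity) (by positivity)]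
    have : (0 : ℝ) ≤ k := by positivity
    nlinarith

theorem sum_hermiteFun_even (N : ℕ) : ∑ n ∈ Finset.range (2 * N), (hermiteFun n 0) ^ 2
      = (Real.sqrt Real.pi)⁻¹ * ∑ l ∈ Finset.range N,
          ((2 * l).factorial : ℝ) / (4 ^ l * ((l.factorial : ℝ)) ^ 2) := by
  induction N with
  | zero => simp
  | succ k ih =>
    rw [show 2 * (k + 1) = 2 * k + 1 + 1 by ring, Finset.sum_range_succ, Finset.sum_range_succ,
      Finset.sum_range_succ, ih, hermiteFun_zero_odd, hermiteFun_zero_even]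
    ring

theorem sum_central_tendsto : Tendsto (fun N => ∑ l ∈ Finset.range N,
        ((2 * l).factorial : ℝ) / (4 ^ l * ((l.factorial : ℝ)) ^ 2)) atTop atTop :=
  tendsto_atTop_mono (fun _ => Finset.sum_le_sum fun l _ => centralTerm_lower l)
    Real.tendsto_sum_range_one_div_nat_succ_atTop

/-- the series `∑ₙ (eₙ(0))²` diverges to `+∞` (so `⟨δ,δ⟩_e` does not
exist); its partial sums equal `(1/√π) ∑_{l<N} (2l)!/(4^l (l!)²)`, a divergent
series of nonnegative terms. -/
theorem eProduct_delta_delta_diverges :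
    Tendsto (fun N => ∑ n ∈ Finset.range N, (hermiteFun n 0) ^ 2) atTop atTop ∧
    (∀ N : ℕ, ∑ n ∈ Finset.range (2 * N), (hermiteFun n 0) ^ 2
      = (Real.sqrt Real.pi)⁻¹ * ∑ l ∈ Finset.range N,
          ((2 * l).factorial : ℝ) / (4 ^ l * ((l.factorial : ℝ)) ^ 2)) ∧
    Tendsto (fun N => ∑ l ∈ Finset.range N,
        ((2 * l).factorial : ℝ) / (4 ^ l * ((l.factorial : ℝ)) ^ 2))
      atTop atTop := by
  refine ⟨?_, sum_hermiteFun_even, sum_central_tendsto⟩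
  have hp : (0 : ℝ) < (Real.sqrt Real.pi)⁻¹ := inv_pos.2 (Real.sqrt_pos.2 Real.pi_pos)
  have h := sum_central_tendsto.const_mul_atTop hp
  refine tendsto_atTop_atTop_of_monotone ?_ ?_
  · intro a b hab
    exact Finset.sum_le_sum_of_subset_of_nonneg (Finset.range_mono hab)
      fun _ _ _ => sq_nonneg _
  · intro b
    obtain ⟨N, hN⟩ := (h.eventually_ge_atTop b).exists
    exact ⟨2 * N, by rw [sum_hermiteFun_even]; exact hN⟩
end
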